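/- Let H be an induced subgraph of a graph G with mr(F₂,H) = k, and suppose G ∈ F_{k+1}(F₂,H). Let C(F₂,H) be the set of equivalence classes of MR(F₂,H) under the relation of having equal column spaces. If |V(G)| − |V(H)| ≥ |C(F₂,H)| + 1, then there exists M ∈ MR(F₂,H) such that every vertex of G−H is rank-preserving with respect to M. -/

import Mathlib

/-!
For every vertex `v` of `G - H`, a matrix of minimum rank of `G - v` has rank at most `mr(F₂, H)`.
Its block `M` on `H` cannot have smaller rank, so `M ∈ MR(F₂, H)`, and the rows indexed by `H` have
the same column space as `M`. Over `F₂` the columns of these rows at vertices outside `H` are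
exactly the weights, so every vertex of `G - H` except possibly `v` is rank-preserving with respect
to `M`. As there are more vertices than column spaces, two distinct vertices yield the same column
space, and a vertex of `G - H` differs from at least one of them.
-/

open Matrix

/-- `A` is a symmetric matrix over `F` whose off-diagonal nonzero pattern is
given by the graph `G` (diagonal entries are unconstrained). -/
def IsGraphMatrix (F : Type*) [Field F] {V : Type*} (G : SimpleGraph V)
    (A : Matrix V V F) : Prop :=
  A.IsSymm ∧ ∀ i j : V, i ≠ j → (A i j ≠ 0 ↔ G.Adj i j)

/-- The minimum rank `mr(F, G)` of the graph `G` over the field `F`. -/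
noncomputable def minRank (F : Type*) [Field F] {V : Type*} [Fintype V]
    (G : SimpleGraph V) : ℕ :=
  sInf {r : ℕ | ∃ A : Matrix V V F, IsGraphMatrix F G A ∧ A.rank = r}

/-- The graph `G - v` obtained from `G` by deleting the vertex `v`. -/
def deleteVert {V : Type*} (G : SimpleGraph V) (v : V) : SimpleGraph {u : V // u ≠ v} :=
  SimpleGraph.comap Subtype.val G

/-- The induced subgraph of `G` on a finite set `W` of vertices. -/
def inducedSub {V : Type*} (G : SimpleGraph V) (W : Finset V) :
    SimpleGraph {x : V // x ∈ W} :=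
  SimpleGraph.comap Subtype.val G

/-- `MR(F, G)`: the set of matrices in `S(F, G)` attaining the minimum rank of `G`. -/
noncomputable def MRSet (F : Type*) [Field F] {V : Type*} [Fintype V] (G : SimpleGraph V) :
    Set (Matrix V V F) :=
  {A | IsGraphMatrix F G A ∧ A.rank = minRank F G}

/-- The weight vector of a vertex `v` with respect to the induced subgraph on `W`:
its entry at `i ∈ W` is `1` iff `v` is adjacent to `i` in `G`. -/
def wtVec {V : Type*} (G : SimpleGraph V) [DecidableRel G.Adj] (W : Finset V) (v : V) :
    {x : V // x ∈ W} → ZMod 2 :=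
  fun i => if G.Adj v ↑i then 1 else 0

/-- The matrix `[M | w]`: `M` augmented by the extra column `w`. -/
def augmentCol {F : Type*} {n : Type*} (M : Matrix n n F) (w : n → F) :
    Matrix n (n ⊕ Unit) F :=
  Matrix.of fun i => Sum.elim (fun j => M i j) (fun _ => w i)

/-- The bordered matrix `[[M, u], [vᵀ, c]]`. -/
def borderMat {F : Type*} {n : Type*} (M : Matrix n n F) (u v : n → F) (c : F) :
    Matrix (n ⊕ Unit) (n ⊕ Unit) F :=
  Matrix.of (Sum.elim (fun i => Sum.elim (fun j => M i j) (fun _ => u i))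
                      (fun _ => Sum.elim (fun j => v j) (fun _ => c)))

theorem rank_augmentCol_eq_rank_iff {F n : Type*} [Field F] [Fintype n] (M : Matrix n n F)
    (w : n → F) : (augmentCol M w).rank = M.rank ↔ w ∈ LinearMap.range M.mulVecLin := by
  have hcol : Set.range (augmentCol M w).col = Set.range M.col ∪ {w} := by
    rw [← Set.range_const (ι := Unit) (c := w), ← Set.Sum.elim_range]
    exact congrArg Set.range (funext (Sum.rec (fun _ => rfl) fun _ => rfl))
  have hsup : LinearMap.range (augmentCol M w).mulVecLin =
      LinearMap.range M.mulVecLin ⊔ Submodule.span F {w} := by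
    rw [range_mulVecLin, range_mulVecLin, hcol, Submodule.span_union]
  rw [rank, rank, hsup, ← Submodule.span_singleton_le_iff_mem, ← sup_eq_left]
  exact ⟨fun h => (Submodule.eq_of_le_of_finrank_eq le_sup_left h.symm).symm, fun h => by rw [h]⟩

theorem col_mem_range_submatrix_of_rank_le {F m n p q : Type*} [Field F] [Fintype n] [Fintype q]
    (A : Matrix m n F) (r : p → m) (c : q → n) (h : A.rank ≤ (A.submatrix r c).rank) (u : n) :
    (fun i => A (r i) u) ∈ LinearMap.range (A.submatrix r c).mulVecLin := by
  have hle : LinearMap.range (A.submatrix r c).mulVecLin ≤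
      LinearMap.range (A.submatrix r id).mulVecLin := by
    rw [range_mulVecLin, range_mulVecLin]
    exact Submodule.span_mono (Set.range_comp_subset_range c (A.submatrix r id).col)
  rw [Submodule.eq_of_le_of_finrank_le hle ((A.rank_submatrix_le r id).trans h), range_mulVecLin]
  exact Submodule.subset_span ⟨u, rfl⟩

section MinRank

variable {F V W : Type*} [Field F] {G : SimpleGraph V} {A : Matrix V V F}

theorem isGraphMatrix_adjMatrix (F : Type*) [Field F] (G : SimpleGraph V) [DecidableRel G.Adj] :
    IsGraphMatrix F G (G.adjMatrix F) :=
  ⟨G.isSymm_adjMatrix, fun i j _ => by simp [SimpleGraph.adjMatrix_apply]⟩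

theorem IsGraphMatrix.submatrix (hA : IsGraphMatrix F G A) (e : W ↪ V) :
    IsGraphMatrix F (G.comap e) (A.submatrix e e) :=
  ⟨hA.1.submatrix e, fun i j hij => hA.2 (e i) (e j) (e.injective.ne hij)⟩

theorem IsGraphMatrix.minRank_le_rank [Fintype V] (hA : IsGraphMatrix F G A) :
    minRank F G ≤ A.rank :=
  Nat.sInf_le ⟨A, hA, rfl⟩

theorem MRSet_nonempty (F : Type*) [Field F] [Fintype V] (G : SimpleGraph V) :
    (MRSet F G).Nonempty := by
  classical
  exact Nat.sInf_mem (s := {r | ∃ A, IsGraphMatrix F G A ∧ A.rank = r})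
    ⟨_, _, isGraphMatrix_adjMatrix F G, rfl⟩

theorem IsGraphMatrix.rank_le_rank_submatrix [Fintype V] [Fintype W] (hA : IsGraphMatrix F G A)
    (e : W ↪ V) (h : A.rank ≤ minRank F (G.comap e)) : A.rank ≤ (A.submatrix e e).rank :=
  h.trans (hA.submatrix e).minRank_le_rank

theorem IsGraphMatrix.submatrix_mem_MRSet [Fintype V] [Fintype W] (hA : IsGraphMatrix F G A)
    (e : W ↪ V) (h : A.rank ≤ minRank F (G.comap e)) : A.submatrix e e ∈ MRSet F (G.comap e) :=
  ⟨hA.submatrix e, ((A.rank_submatrix_le e e).trans h).antisymm (hA.submatrix e).minRank_le_rank⟩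

theorem IsGraphMatrix.apply_eq_ite_adj {A : Matrix V V (ZMod 2)}
    (hA : IsGraphMatrix (ZMod 2) G A) {i j : V} {_ : Decidable (G.Adj i j)} (hij : i ≠ j) :
    A i j = if G.Adj i j then 1 else 0 := by
  have eq_ite_ne_zero : ∀ x : ZMod 2, x = if x ≠ 0 then 1 else 0 := by decide
  rw [eq_ite_ne_zero (A i j)]
  exact if_congr (hA.2 i j hij) rfl rfl

/-- The column spaces of the matrices in `MR(F, G)`. They stand for the equivalence classes
`C(F, G)`, since two matrices in `MR(F, G)` are equivalent iff their column spaces agree. -/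
def minRankColumnSpaces (F : Type*) [Field F] [Fintype V] (G : SimpleGraph V) :
    Set (Submodule F (V → F)) :=
  (fun M : Matrix V V F => LinearMap.range M.mulVecLin) '' MRSet F G

end MinRank

section Deletion

variable {V : Type*} [Fintype V] [DecidableEq V] (G : SimpleGraph V) [DecidableRel G.Adj]
  (W : Finset V)

theorem exists_mem_MRSet_forall_ne_wtVec_mem_range {v : V} (hv : v ∉ W)
    (hdel : minRank (ZMod 2) (deleteVert G v) ≤ minRank (ZMod 2) (inducedSub G W)) :
    ∃ M ∈ MRSet (ZMod 2) (inducedSub G W),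
      ∀ u ∉ W, u ≠ v → wtVec G W u ∈ LinearMap.range M.mulVecLin := by
  obtain ⟨A, hA, hAr⟩ := MRSet_nonempty (ZMod 2) (deleteVert G v)
  let e : {x // x ∈ W} ↪ {u // u ≠ v} :=
    Subtype.impEmbedding _ _ fun x hx => ne_of_mem_of_not_mem hx hv
  have hrank : A.rank ≤ minRank (ZMod 2) ((deleteVert G v).comap e) := hAr.trans_le hdel
  refine ⟨A.submatrix e e, hA.submatrix_mem_MRSet e hrank, fun u huW huv => ?_⟩
  have hcol := col_mem_range_submatrix_of_rank_le A e e (hA.rank_le_rank_submatrix e hrank) ⟨u, huv⟩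
  suffices hwt : wtVec G W u = fun i => A (e i) ⟨u, huv⟩ from hwt ▸ hcol
  funext i
  have hne : (⟨u, huv⟩ : {u // u ≠ v}) ≠ e i :=
    Subtype.coe_ne_coe.mp (ne_of_mem_of_not_mem i.2 huW).symm
  exact ((hA.1.apply _ _).symm.trans (hA.apply_eq_ite_adj hne)).symm

theorem exists_M_all_vertices_rank_preserving_general
    (hdel : ∀ v ∉ W, minRank (ZMod 2) (deleteVert G v) ≤ minRank (ZMod 2) (inducedSub G W))
    (hcard : (minRankColumnSpaces (ZMod 2) (inducedSub G W)).ncard < Wᶜ.card) :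
    ∃ M ∈ MRSet (ZMod 2) (inducedSub G W),
      ∀ v ∉ W, (augmentCol M (wtVec G W v)).rank = M.rank := by
  have hgood (v : {v // v ∈ Wᶜ}) :=
    have hv := Finset.mem_compl.mp v.2
    exists_mem_MRSet_forall_ne_wtVec_mem_range G W hv (hdel v hv)
  choose M hM hwt using hgood
  have hmem (v) : LinearMap.range (M v).mulVecLin ∈
      minRankColumnSpaces (ZMod 2) (inducedSub G W) := ⟨M v, hM v, rfl⟩
  rw [← Nat.card_eq_finsetCard, ← Set.ncard_univ] at hcard
  obtain ⟨v, -, v', -, hne, hrange⟩ :=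
    Set.exists_ne_map_eq_of_ncard_lt_of_maps_to hcard fun v _ => hmem v
  refine ⟨M v, hM v, fun u hu => (rank_augmentCol_eq_rank_iff _ _).mpr ?_⟩
  rcases eq_or_ne u v with rfl | huv
  · exact hrange ▸ hwt v' _ hu (Subtype.coe_ne_coe.mpr hne)
  · exact hwt v u hu huv

end Deletion

/-- Let `H = G[W]` be an induced subgraph of `G` with `mr(F₂, H) = k`, and suppose
`G ∈ F_{k+1}(F₂, H)` (witnessed by this copy of `H`).  If `|V(G)| - |V(H)|` is at least
one more than the number of equivalence classes of `MR(F₂, H)` under equality of column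
spaces, then there is an `M ∈ MR(F₂, H)` with respect to which every vertex of `G - H`
is rank-preserving. -/
theorem exists_M_all_vertices_rank_preserving {V : Type*} [Fintype V] [DecidableEq V]
    (G : SimpleGraph V) [DecidableRel G.Adj] (W : Finset V) (k : ℕ)
    (hH : minRank (ZMod 2) (inducedSub G W) = k)
    (hG : k + 1 ≤ minRank (ZMod 2) G)
    (hdel : ∀ v : V, v ∉ W → minRank (ZMod 2) (deleteVert G v) ≤ k)
    (hcard : ((fun M : Matrix {x : V // x ∈ W} {x : V // x ∈ W} (ZMod 2) =>
        LinearMap.range M.mulVecLin) '' MRSet (ZMod 2) (inducedSub G W)).ncard + 1 ≤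
        Wᶜ.card) :
    ∃ M ∈ MRSet (ZMod 2) (inducedSub G W),
      ∀ v : V, v ∉ W → (augmentCol M (wtVec G W v)).rank = M.rank := by
  subst hH
  exact exists_M_all_vertices_rank_preserving_general G W hdel hcard
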